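/- arXiv:1612.06651 — 3 statements merged into one kernel-verified Lean document; each statement's English description precedes it below -/
import Mathlib

section
/- Let X be a regular Hausdorff (T3) topological space and let κ be an infinite cardinal. Assume that X is almost discretely Lindelöf and that every point of X has a neighborhood basis of cardinality at most κ. Then the cardinality of X is at most 2^κ. -/
open Cardinal Set Filter Topology

/-- A topological space is *almost discretely Lindelöf* if every subset that is
discrete in the subspace topology is contained in a Lindelöf subspace. -/
def AlmostDiscretelyLindelof (X : Type*) [TopologicalSpace X] : Prop :=
  ∀ D : Set X, DiscreteTopology D → ∃ Y : Set X, D ⊆ Y ∧ IsLindelof Y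

theorem adl_closing {X T ι : Type u} (hι : ℵ₀ ≤ #ι) (hT : #T ≤ 2 ^ #ι)
    (φ : (ι → X) → T → X) (x0 : X) :
    ∃ F : Set X, x0 ∈ F ∧ #F ≤ 2 ^ #ι ∧ ∀ g : ι → X, (∀ i, g i ∈ F) → ∀ t, φ g t ∈ F := by
  let β : Option T → Type u := fun a => match a with
    | none => PEmpty
    | some _ => ι
  let ev : WType β → X := fun w => WType.elim X (fun p : (Σ a : Option T, β a → X) =>
    match p with
    | ⟨none, _⟩ => x0
    | ⟨some t, g⟩ => φ g t) w
  have h2 : ℵ₀ ≤ (2 : Cardinal.{u}) ^ #ι := hι.trans (cantor _).le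
  have hcard : #(WType β) ≤ 2 ^ #ι := by
    apply WType.cardinalMk_le_of_le
    have : ∀ a : Option T, ((2 : Cardinal.{u}) ^ #ι) ^ #(β a) ≤ 2 ^ #ι := by
      intro a
      cases a with
      | none => 
        simp only [β, mk_pempty, power_zero]
        exact one_le_aleph0.trans h2
      | some t => 
        simp only [β]
        rw [← power_mul, mul_eq_self hι]
    calc Cardinal.sum (fun a : Option T => ((2 : Cardinal.{u}) ^ #ι) ^ #(β a))
        ≤ Cardinal.sum (fun a : Option T => (2 : Cardinal.{u}) ^ #ι) := sum_le_sum _ _ this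
      _ = #(Option T) * 2 ^ #ι := by simp
      _ ≤ 2 ^ #ι * 2 ^ #ι := by
          gcongr
          rw [mk_option]
          exact add_le_of_le h2 hT (one_le_aleph0.trans h2)
      _ = 2 ^ #ι := mul_eq_self h2
  refine ⟨range ev, ⟨WType.mk none (fun e => nomatch e), rfl⟩, mk_range_le.trans hcard, ?_⟩
  intro g hg t
  choose w hw using hg
  refine ⟨WType.mk (some t) w, ?_⟩
  have : g = fun i => ev (w i) := by funext i; exact (hw i).symm
  rw [this]
  rfl

theorem adl_enum {X ι : Type u} {F A : Set X} (hF : F.Nonempty) (hAF : A ⊆ F)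
    (hA : #A ≤ #ι) : ∃ g : ι → X, (∀ i, g i ∈ F) ∧ A ⊆ range g := by
  classical
  obtain ⟨x0, hx0⟩ := hF
  obtain ⟨e⟩ := hA
  refine ⟨fun i => if h : ∃ a, e a = i then (h.choose : X) else x0, ?_, ?_⟩
  · intro i
    dsimp only
    split_ifs with h
    · exact hAF h.choose.2
    · exact hx0
  · intro a ha
    refine ⟨e ⟨a, ha⟩, ?_⟩
    have h : ∃ b, e b = e ⟨a, ha⟩ := ⟨_, rfl⟩
    dsimp only
    rw [dif_pos h]
    have := e.injective h.choose_spec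
    rw [this]

theorem adl_closeF {X ι : Type u} [TopologicalSpace X] [T2Space X] (hι : ℵ₀ ≤ #ι)
    (N : X → ι → Set X) (hNn : ∀ x i, N x i ∈ 𝓝 x)
    (hNb : ∀ x, ∀ s ∈ 𝓝 x, ∃ i, N x i ⊆ s)
    (C : X → ι → Set X) (D : (ι → X) → Set X) (hD : ∀ g, #(D g) ≤ 2 ^ #ι) (x0 : X) :
    ∃ F : Set X, F.Nonempty ∧ #F ≤ 2 ^ #ι ∧ IsClosed F ∧
      (∀ g : ι → X, (∀ i, g i ∈ F) → D g ⊆ F) ∧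
      (∀ g : ι → X, (∀ i, g i ∈ F) → ∀ s : ι → ι, (∃ z, ∀ j, z ∈ C (g j) (s j)) →
        ∃ z ∈ F, ∀ j, z ∈ C (g j) (s j)) := by
  classical
  have h2 : ℵ₀ ≤ (2 : Cardinal.{u}) ^ #ι := hι.trans (cantor _).le
  have hDe : ∀ g, ∃ e : Set ι → X, D g ⊆ range e := by
    intro g
    obtain ⟨e, -, he⟩ := adl_enum (ι := Set ι) (F := univ) (A := D g) ⟨x0, trivial⟩
      (subset_univ _) (by simpa using hD g)
    exact ⟨e, he⟩
  choose eD heD using hDe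
  let code : (ι → X) → X → (ι → Set ι) := fun g x i => g ⁻¹' (N x i)
  let φ : (ι → X) → ((ι → Set ι) ⊕ Set ι ⊕ (ι → ι)) → X := fun g t =>
    match t with
    | .inl c => if h : ∃ x ∈ closure (range g), code g x = c then h.choose else x0
    | .inr (.inl a) => eD g a
    | .inr (.inr s) => if h : ∃ z, ∀ j, z ∈ C (g j) (s j) then h.choose else x0
  have hT : #((ι → Set ι) ⊕ Set ι ⊕ (ι → ι)) ≤ 2 ^ #ι := by
    simp only [mk_sum, mk_pi, prod_const, lift_id, mk_set]
    rw [← power_mul, mul_eq_self hι, power_self_eq hι, add_eq_self h2, add_eq_self h2]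
  obtain ⟨F, hx0, hF, hcl⟩ := adl_closing hι hT φ x0
  refine ⟨F, ⟨x0, hx0⟩, hF, ?_, ?_, ?_⟩
  · rw [← closure_subset_iff_isClosed]
    intro x hx
    have : ∀ i, ∃ y, y ∈ N x i ∧ y ∈ F := fun i => mem_closure_iff_nhds.1 hx _ (hNn x i)
    choose g hgN hgF using this
    have hxg : x ∈ closure (range g) := by
      rw [mem_closure_iff_nhds]
      intro s hs
      obtain ⟨i, hi⟩ := hNb x s hs
      exact ⟨g i, hi (hgN i), i, rfl⟩
    have key := hcl g hgF (.inl (code g x))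
    have h : ∃ y ∈ closure (range g), code g y = code g x := ⟨x, hxg, rfl⟩
    have hφ : φ g (.inl (code g x)) = h.choose := dif_pos h
    rw [hφ] at key
    have hspec := h.choose_spec
    generalize h.choose = y at key hspec
    by_cases hyx : y = x
    · rwa [← hyx]
    exfalso
    obtain ⟨u, v, hu, hv, huv⟩ := t2_separation_nhds hyx
    obtain ⟨i, hi⟩ := hNb y u hu
    obtain ⟨i', hi'⟩ := hNb x v hv
    have e' : g ⁻¹' (N y i') = g ⁻¹' (N x i') := congrFun hspec.2 i'
    obtain ⟨_, ⟨hz1, hz2⟩, j, rfl⟩ := mem_closure_iff_nhds.1 hspec.1 _ (inter_mem (hNn y i) (hNn y i'))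
    have : j ∈ g ⁻¹' (N x i') := by rw [← e']; exact hz2
    exact Set.disjoint_left.1 huv (hi hz1) (hi' this)
  · intro g hg y hy
    obtain ⟨a, rfl⟩ := heD g hy
    exact hcl g hg (.inr (.inl a))
  · intro g hg s h
    have hφ : φ g (.inr (.inr s)) = h.choose := dif_pos h
    refine ⟨h.choose, ?_, h.choose_spec⟩
    rw [← hφ]
    exact hcl g hg (.inr (.inr s))

theorem adl_arh {X ι : Type u} [TopologicalSpace X] [T2Space X] [LindelofSpace X] (hι : ℵ₀ ≤ #ι)
    (N : X → ι → Set X) (hNn : ∀ x i, N x i ∈ 𝓝 x)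
    (hNb : ∀ x, ∀ s ∈ 𝓝 x, ∃ i, N x i ⊆ s) : #X ≤ 2 ^ #ι := by
  by_cases hX : Nonempty X
  swap
  · rw [not_nonempty_iff] at hX
    simp
  obtain ⟨x0⟩ := hX
  obtain ⟨F, hFn, hF, hFc, -, hFC⟩ := adl_closeF hι N hNn hNb (fun x i => (N x i)ᶜ) (fun _ => ∅)
    (by simp) x0
  suffices h : F = Set.univ by rw [h, mk_univ] at hF; exact hF
  by_contra hne
  obtain ⟨p, hp⟩ := (ne_univ_iff_exists_notMem F).1 hne
  have : ∀ z, ∃ i, z ∈ F → p ∉ N z i := by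
    intro z
    by_cases hz : z ∈ F
    · have : ({p}ᶜ : Set X) ∈ 𝓝 z := isOpen_compl_singleton.mem_nhds (by rintro rfl; exact hp hz)
      obtain ⟨i, hi⟩ := hNb z _ this
      exact ⟨i, fun _ h => hi h rfl⟩
    · obtain ⟨i, -⟩ := hNb z univ univ_mem
      exact ⟨i, fun h => absurd h hz⟩
  choose i hi using this
  obtain ⟨t, htc, htF, hcov⟩ := hFc.isLindelof.elim_nhds_subcover (fun x => N x (i x))
    (fun x _ => hNn x _)
  obtain ⟨g, hgF, hg⟩ := adl_enum (ι := ι) hFn htF ((mk_le_aleph0_iff.2 htc.to_subtype).trans hι)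
  obtain ⟨z, hzF, hz⟩ := hFC g hgF (fun j => i (g j)) ⟨p, fun j => hi _ (hgF j)⟩
  obtain ⟨x, hx, hzx⟩ := mem_iUnion₂.1 (hcov hzF)
  obtain ⟨j, rfl⟩ := hg hx
  exact hz j hzx

theorem adl_discrete {X ι : Type u} [TopologicalSpace X] [T2Space X] (hι : ℵ₀ ≤ #ι)
    (hADL : AlmostDiscretelyLindelof X)
    (N : X → ι → Set X) (hNn : ∀ x i, N x i ∈ 𝓝 x)
    (hNb : ∀ x, ∀ s ∈ 𝓝 x, ∃ i, N x i ⊆ s) (D : Set X) (hD : DiscreteTopology D) :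
    #D ≤ 2 ^ #ι := by
  obtain ⟨Y, hDY, hY⟩ := hADL D hD
  refine (mk_le_mk_of_subset hDY).trans ?_
  haveI : LindelofSpace Y := isLindelof_iff_LindelofSpace.1 hY
  refine adl_arh hι (fun (y : Y) i => Subtype.val ⁻¹' (N y i)) ?_ ?_
  · intro y i
    exact preimage_coe_mem_nhds_subtype.2 (mem_nhdsWithin_of_mem_nhds (hNn y i))
  · intro y s hs
    rw [nhds_subtype, mem_comap] at hs
    obtain ⟨t, ht, hts⟩ := hs
    obtain ⟨i, hi⟩ := hNb y t ht
    exact ⟨i, (preimage_mono hi).trans hts⟩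

theorem adl_shap {X : Type u} [TopologicalSpace X] (K : Set X) (c : X → Set X)
    (hc : ∀ x, c x ∈ 𝓝 x) :
    ∃ D : Set X, DiscreteTopology D ∧ D ⊆ Kᶜ ∧ Kᶜ ⊆ closure D ∪ ⋃ q ∈ D, c q := by
  let S : Set (Set (X × Set X)) := {P | (∀ a ∈ P, a.1 ∈ Kᶜ ∧ IsOpen a.2 ∧ a.1 ∈ a.2 ∧ a.2 ⊆ c a.1) ∧
    ∀ a ∈ P, ∀ b ∈ P, b.1 ∈ a.2 → b = a}
  obtain ⟨P, hP⟩ := zorn_subset S (by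
    intro ch hch hchain
    refine ⟨⋃₀ ch, ⟨?_, ?_⟩, fun s hs => subset_sUnion_of_mem hs⟩
    · rintro a ⟨s, hs, has⟩
      exact (hch hs).1 a has
    · rintro a ⟨s, hs, has⟩ b ⟨t, ht, hbt⟩
      rcases hchain.total hs ht with h | h
      · exact (hch ht).2 a (h has) b hbt
      · exact (hch hs).2 a has b (h hbt))
  obtain ⟨hP1, hP2⟩ := hP.prop
  refine ⟨Prod.fst '' P, ?_, ?_, ?_⟩
  · rw [discreteTopology_subtype_iff']
    rintro _ ⟨a, ha, rfl⟩
    refine ⟨a.2, (hP1 a ha).2.1, ?_⟩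
    ext x
    constructor
    · rintro ⟨hx, b, hb, rfl⟩
      rw [hP2 a ha b hb hx]; rfl
    · rintro rfl
      exact ⟨(hP1 a ha).2.2.1, a, ha, rfl⟩
  · rintro _ ⟨a, ha, rfl⟩
    exact (hP1 a ha).1
  · intro r hr
    by_contra hcon
    rw [mem_union, not_or] at hcon
    obtain ⟨h1, h2⟩ := hcon
    have h3 : ∀ a ∈ P, r ∉ a.2 := by
      intro a ha hra
      exact h2 (mem_iUnion₂.2 ⟨a.1, ⟨a, ha, rfl⟩, (hP1 a ha).2.2.2 hra⟩)
    let n : X × Set X := (r, interior (c r) \ closure (Prod.fst '' P))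
    have hr' : r ∈ n.2 := ⟨mem_interior_iff_mem_nhds.2 (hc r), h1⟩
    have hins : insert n P ∈ S := by
      refine ⟨?_, ?_⟩
      · rintro a (rfl | ha)
        · exact ⟨hr, isOpen_interior.sdiff isClosed_closure, hr',
            sdiff_subset.trans interior_subset⟩
        · exact hP1 a ha
      · rintro a (rfl | ha) b (rfl | hb) hab
        · rfl
        · exact absurd (subset_closure (mem_image_of_mem _ hb)) hab.2
        · exact absurd hab (h3 a ha)
        · exact hP2 a ha b hb hab
    have hn : n ∈ P := hP.le_of_ge hins (subset_insert _ _) (mem_insert _ _)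
    exact h3 n hn hr'

theorem adl_bdd {ι W : Type u} [LinearOrder W] (hι : ℵ₀ ≤ #ι) (hW : #ι < #W)
    (hI : ∀ w : W, #(Iic w) ≤ #ι) {J : Type u} (hJ : #J ≤ #ι) (f : J → W) :
    ∃ w, ∀ j, f j < w := by
  by_contra hcon
  push Not at hcon
  have : (univ : Set W) ⊆ ⋃ j, Iic (f j) := fun w _ => mem_iUnion.2 (hcon w)
  have h1 := (mk_le_mk_of_subset this).trans (mk_iUnion_le_sum_mk)
  rw [mk_univ] at h1
  have h2 : Cardinal.sum (fun j => #(Iic (f j))) ≤ #ι := by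
    refine (sum_le_sum _ (fun _ => #ι) (fun j => hI _)).trans ?_
    rw [sum_const', ]
    exact (mul_le_mul_left hJ _).trans (mul_eq_self hι).le
  exact absurd (h1.trans h2) (not_le.2 hW)

/-- No free sequences of length `κ⁺`. -/
theorem adl_free {X ι W : Type u} [TopologicalSpace X] (hι : ℵ₀ ≤ #ι)
    (hADL : AlmostDiscretelyLindelof X)
    (N : X → ι → Set X) (hNn : ∀ x i, N x i ∈ 𝓝 x)
    (hNb : ∀ x, ∀ s ∈ 𝓝 x, ∃ i, N x i ⊆ s)
    [LinearOrder W] [WellFoundedLT W] (hW : #ι < #W) (hI : ∀ w : W, #(Iic w) ≤ #ι)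
    (x : W → X) (Z : W → Set X) (hZ : ∀ w, IsClosed (Z w))
    (hxZ : ∀ w v, w ≤ v → x v ∈ Z w) (hd : ∀ w, Disjoint (closure (x '' Iio w)) (Z w)) : False := by
  have hsucc : ∀ w : W, ∃ v, w < v ∧ ∀ u, w < u → v ≤ u := by
    intro w
    obtain ⟨v, hv⟩ := adl_bdd (J := PUnit) hι hW hI (by simpa using one_le_aleph0.trans hι) (fun _ => w)
    have hne : (Ioi w).Nonempty := ⟨v, hv ⟨⟩⟩
    refine ⟨wellFounded_lt.min _ hne, wellFounded_lt.min_mem _ hne, fun u hu => ?_⟩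
    exact not_lt.1 (wellFounded_lt.not_lt_min _ hu)
  have hdisc : DiscreteTopology (range x) := by
    rw [discreteTopology_subtype_iff']
    rintro _ ⟨w, rfl⟩
    obtain ⟨v, hwv, hv⟩ := hsucc w
    refine ⟨(closure (x '' Iio w) ∪ Z v)ᶜ, (isClosed_closure.union (hZ v)).isOpen_compl, ?_⟩
    ext y
    constructor
    · rintro ⟨hy, u, rfl⟩
      rw [mem_compl_iff, mem_union, not_or] at hy
      rcases lt_trichotomy u w with h | h | h
      · exact absurd (subset_closure (mem_image_of_mem x (show u ∈ Iio w from h))) hy.1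
      · rw [h]; rfl
      · exact absurd (hxZ v u (hv u h)) hy.2
    · rintro rfl
      refine ⟨?_, w, rfl⟩
      rintro (h | h)
      · exact Set.disjoint_left.1 (hd w) h (hxZ w w le_rfl)
      · exact Set.disjoint_left.1 (hd v) (subset_closure ⟨w, hwv, rfl⟩) h
  obtain ⟨Y, hDY, hY⟩ := hADL _ hdisc
  have hloc : ∀ y : X, ∃ O ∈ 𝓝 y, ∃ w, ∀ v, w ≤ v → x v ∉ O := by
    intro y
    by_cases h : ∃ w, y ∈ closure (x '' Iio w)
    · obtain ⟨w, hw⟩ := h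
      refine ⟨(Z w)ᶜ, (hZ w).isOpen_compl.mem_nhds (Set.disjoint_left.1 (hd w) hw), w, ?_⟩
      intro v hv h
      exact h (hxZ w v hv)
    · by_contra hcon
      push Not at hcon
      obtain ⟨w0, -⟩ := adl_bdd (J := PEmpty) hι hW hI (by simp) (fun e => nomatch e)
      have : ∀ i, ∃ v, x v ∈ N y i := fun i => by
        obtain ⟨v, -, hv⟩ := hcon _ (hNn y i) w0
        exact ⟨v, hv⟩
      choose f hf using this
      obtain ⟨w, hw⟩ := adl_bdd hι hW hI le_rfl f
      refine h ⟨w, ?_⟩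
      rw [mem_closure_iff_nhds]
      intro s hs
      obtain ⟨i, hi⟩ := hNb y s hs
      exact ⟨x (f i), hi (hf i), f i, hw i, rfl⟩
  choose O hO w hw using hloc
  obtain ⟨t, htc, -, hcov⟩ := hY.elim_nhds_subcover O (fun y _ => hO y)
  obtain ⟨v, hv⟩ := adl_bdd (J := t) hι hW hI ((mk_le_aleph0_iff.2 htc.to_subtype).trans hι)
    (fun y => w y)
  obtain ⟨y, hy, hvy⟩ := mem_iUnion₂.1 (hcov (hDY ⟨v, rfl⟩))
  exact hw y v (hv ⟨y, hy⟩).le hvy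

theorem adl_main {X ι : Type u} [TopologicalSpace X] [T3Space X] (hι : ℵ₀ ≤ #ι)
    (hADL : AlmostDiscretelyLindelof X)
    (N : X → ι → Set X) (hNn : ∀ x i, N x i ∈ 𝓝 x)
    (hNb : ∀ x, ∀ s ∈ 𝓝 x, ∃ i, N x i ⊆ s) : #X ≤ 2 ^ #ι := by
  classical
  by_cases hX : Nonempty X
  swap
  · rw [not_nonempty_iff] at hX
    simp
  obtain ⟨x0⟩ := hX
  have hc : ∀ (g : ι → X) (q : X), ∃ i, q ∉ closure (range g) →
      Disjoint (closure (range g)) (closure (N q i)) := by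
    intro g q
    by_cases hq : q ∈ closure (range g)
    · obtain ⟨i, -⟩ := hNb q univ univ_mem
      exact ⟨i, fun h => absurd hq h⟩
    · obtain ⟨s, hs, hsc, hsub⟩ := exists_mem_nhds_isClosed_subset
        (isClosed_closure.isOpen_compl.mem_nhds hq)
      obtain ⟨i, hi⟩ := hNb q s hs
      refine ⟨i, fun _ => ?_⟩
      rw [Set.disjoint_right]
      intro y hy
      exact hsub (closure_minimal hi hsc hy)
  choose c hc using hc
  have hD : ∀ g : ι → X, ∃ D : Set X, DiscreteTopology D ∧ D ⊆ (closure (range g))ᶜ ∧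
    (closure (range g))ᶜ ⊆ closure D ∪ ⋃ q ∈ D, N q (c g q) :=
    fun g => adl_shap (closure (range g)) (fun q => N q (c g q)) (fun q => hNn _ _)
  choose D hDd hDK hDcov using hD
  obtain ⟨F, hFn, hF, hFc, hFD, hFC⟩ := adl_closeF hι N hNn hNb (fun x i => closure (N x i)) D
    (fun g => adl_discrete hι hADL N hNn hNb _ (hDd g)) x0
  suffices h : F = Set.univ by rw [h, mk_univ] at hF; exact hF
  by_contra hne
  obtain ⟨p, hp⟩ := (ne_univ_iff_exists_notMem F).1 hne
  have key : ∀ E : Set X, ∃ a : X × ι, E ⊆ F → #E ≤ #ι →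
      a.1 ∈ F ∧ p ∈ closure (N a.1 a.2) ∧ Disjoint (closure E) (closure (N a.1 a.2)) := by
    intro E
    by_cases hE : E ⊆ F ∧ #E ≤ #ι
    · obtain ⟨g, hgF, hg⟩ := adl_enum hFn hE.1 hE.2
      have hpg : p ∈ (closure (range g))ᶜ := fun h =>
        hp (closure_minimal (range_subset_iff.2 hgF) hFc h)
      rcases hDcov g hpg with h | h
      · exact absurd (closure_minimal (hFD g hgF) hFc h) hp
      · obtain ⟨q, hq, hpq⟩ := mem_iUnion₂.1 h
        exact ⟨(q, c g q), fun _ _ => ⟨hFD g hgF hq, subset_closure hpq,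
          (hc g q (hDK g hq)).mono_left (closure_mono hg)⟩⟩
    · obtain ⟨i, -⟩ := hNb x0 univ univ_mem
      exact ⟨(x0, i), fun h1 h2 => absurd ⟨h1, h2⟩ hE⟩
  choose a ha using key
  -- picking points
  have pick : ∀ A : Set (X × ι), ∃ z ∈ F, #A ≤ #ι →
      (∀ b ∈ A, b.1 ∈ F ∧ p ∈ closure (N b.1 b.2)) → ∀ b ∈ A, z ∈ closure (N b.1 b.2) := by
    intro A
    by_cases hA : A.Nonempty ∧ #A ≤ #ι ∧ ∀ b ∈ A, b.1 ∈ F ∧ p ∈ closure (N b.1 b.2)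
    · obtain ⟨hA0, hA1, hA2⟩ := hA
      obtain ⟨g, hgA, hg⟩ := adl_enum hA0 le_rfl hA1
      obtain ⟨z, hz, hzz⟩ := hFC (fun i => (g i).1) (fun i => (hA2 _ (hgA i)).1)
        (fun i => (g i).2) ⟨p, fun i => (hA2 _ (hgA i)).2⟩
      refine ⟨z, hz, fun _ _ b hb => ?_⟩
      obtain ⟨i, rfl⟩ := hg hb
      exact hzz i
    · obtain ⟨z, hz⟩ := hFn
      refine ⟨z, hz, fun h1 h2 b hb => absurd ⟨⟨b, hb⟩, h1, h2⟩ hA⟩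
  choose pt hptF hpt using pick
  let W : Type u := (Order.succ #ι).ord.ToType
  have hWc : #W = Order.succ #ι := mk_ord_toType _
  have hW : #ι < #W := by rw [hWc]; exact Order.lt_succ _
  have hIio : ∀ w : W, #(Iio w) ≤ #ι := fun w => Order.lt_succ_iff.1 (mk_Iio_ord_toType w)
  have hI : ∀ w : W, #(Iic w) ≤ #ι := by
    intro w
    rw [← Iio_insert]
    exact mk_insert_le.trans (add_le_of_le hι (hIio w) (one_le_aleph0.trans hι))
  let step : (w : W) → ((v : W) → v < w → X) → X := fun w ih =>
    pt ((fun v : Iic w => a {y | ∃ u, ∃ h : u < v.1, y = ih u (lt_of_lt_of_le h v.2)}) '' univ)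
  let x : W → X := (wellFounded_lt (α := W)).fix step
  have hx : ∀ w, x w = pt ((fun v : W => a (x '' Iio v)) '' Iic w) := by
    intro w
    have h1 : x w = step w (fun v _ => x v) := WellFounded.fix_eq _ _ _
    rw [h1]
    dsimp only [step]
    congr 1
    have h2 : ∀ v : W, {y | ∃ u, ∃ _ : u < v, y = x u} = x '' Iio v := by
      intro v
      ext y
      simp [eq_comm]
    simp only [h2]
    ext b
    simp
  have hxF : ∀ w, x w ∈ F := fun w => by rw [hx]; exact hptF _
  have hE : ∀ w, _ := fun w => ha (x '' Iio w) (by rintro _ ⟨v, -, rfl⟩; exact hxF v)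
    (mk_image_le.trans (hIio w))
  refine adl_free hι hADL N hNn hNb hW hI x
    (fun w => closure (N (a (x '' Iio w)).1 (a (x '' Iio w)).2)) (fun _ => isClosed_closure)
    ?_ (fun w => (hE w).2.2)
  intro w v hwv
  rw [hx v]
  refine hpt _ (mk_image_le.trans (hI v)) ?_ _ ⟨w, hwv, rfl⟩
  rintro _ ⟨u, -, rfl⟩
  exact ⟨(hE u).1, (hE u).2.1⟩

theorem almostDiscretelyLindelof_card_le_of_character
    {X : Type u} [TopologicalSpace X] [T3Space X] (κ : Cardinal.{u})
    (hκ : ℵ₀ ≤ κ)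
    (hADL : AlmostDiscretelyLindelof X)
    (hχ : ∀ x : X, ∃ B : Set (Set X), #B ≤ κ ∧ (∀ b ∈ B, b ∈ 𝓝 x) ∧
      ∀ s ∈ 𝓝 x, ∃ b ∈ B, b ⊆ s) :
    #X ≤ 2 ^ κ := by
  have hN : ∀ x : X, ∃ N : κ.out → Set X, (∀ i, N i ∈ 𝓝 x) ∧ ∀ s ∈ 𝓝 x, ∃ i, N i ⊆ s := by
    intro x
    obtain ⟨B, hB, hBn, hBb⟩ := hχ x
    obtain ⟨b, hb, -⟩ := hBb univ univ_mem
    obtain ⟨g, hgB, hg⟩ := adl_enum (ι := κ.out) (F := B) ⟨b, hb⟩ le_rfl (by rwa [mk_out])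
    refine ⟨g, fun i => hBn _ (hgB i), fun s hs => ?_⟩
    obtain ⟨b, hb, hbs⟩ := hBb s hs
    obtain ⟨i, rfl⟩ := hg hb
    exact ⟨i, hbs⟩
  choose N hN1 hN2 using hN
  have := adl_main (ι := κ.out) (by rwa [mk_out]) hADL N hN1 hN2
  rwa [mk_out] at this
end

section
/- Let X be a first countable, regular Hausdorff (T3) topological space which is almost discretely Lindelöf. Then the cardinality of X is at most 2^ℵ₀ (the continuum). -/
open Cardinal Set Filter Topology

namespace ADL

theorem mk_seq_le {A : Type u} (h : #A ≤ 𝔠) : #(ℕ → A) ≤ 𝔠 := by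
  have : #(ℕ → A) = #A ^ (ℵ₀ : Cardinal.{u}) := by simp [Cardinal.mk_pi]
  rw [this, ← continuum_power_aleph0]
  exact Cardinal.power_le_power_right h

theorem exists_param {A : Type u} (S : Set A) (hne : S.Nonempty) (h : #S ≤ 𝔠) :
    ∃ f : (Quotient.out (𝔠 : Cardinal.{u})) → A, range f = S := by
  have h' : #S ≤ #(Quotient.out (𝔠 : Cardinal.{u})) := by rwa [Cardinal.mk_out]
  obtain ⟨e⟩ := Cardinal.le_def _ _ |>.1 h'
  have : Nonempty S := hne.to_subtype
  refine ⟨fun i => (Function.invFun e i : S), ?_⟩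
  have hs := Function.invFun_surjective e.injective
  change range (Subtype.val ∘ Function.invFun e) = S
  rw [hs.range_comp]
  simp

theorem mk_closure_le {X : Type u} [TopologicalSpace X] [T2Space X] [FirstCountableTopology X]
    (A : Set X) (h : #A ≤ 𝔠) : #(closure A) ≤ 𝔠 := by
  have hs : ∀ x : closure A, ∃ s : ℕ → A, Tendsto (fun n => (s n : X)) atTop (𝓝 (x : X)) := by
    intro x
    obtain ⟨s, hs, ht⟩ := mem_closure_iff_seq_limit.1 x.2
    exact ⟨fun n => ⟨s n, hs n⟩, ht⟩
  choose s hs using hs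
  have hinj : Function.Injective s := by
    intro x y hxy
    have h1 := hs x
    rw [hxy] at h1
    exact Subtype.ext (tendsto_nhds_unique h1 (hs y))
  exact (Cardinal.mk_le_of_injective hinj).trans (mk_seq_le h)

theorem exists_hull {X J : Type u} (hJ : #J ≤ 𝔠) (Φ : J → (ℕ → X) → X) (x0 : X) :
    ∃ M : Set X, x0 ∈ M ∧ #M ≤ 𝔠 ∧ ∀ j s, (∀ n, s n ∈ M) → Φ j s ∈ M := by
  let β : Option J → Type := fun a => match a with
    | none => Empty
    | some _ => ℕ
  let ev : WType β → X := WType.elim X (fun x : Σ a : Option J, β a → X =>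
    match x with
    | ⟨none, _⟩ => x0
    | ⟨some j, s⟩ => Φ j s)
  refine ⟨range ev, ⟨WType.mk none (fun e => nomatch e), rfl⟩, ?_, ?_⟩
  · refine Cardinal.mk_range_le.trans ?_
    apply WType.cardinalMk_le_of_le'
    have h1 : ∀ a : Option J, (𝔠 : Cardinal.{u}) ^ lift.{u} #(β a) ≤ 𝔠 := by
      rintro (_ | j)
      · simp [β, Cardinal.one_le_iff_pos, continuum_pos]
      · simp [β]
    refine (Cardinal.sum_le_sum _ _ h1).trans ?_
    rw [Cardinal.sum_const', Cardinal.mk_option]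
    calc (#J + 1) * 𝔠 ≤ (𝔠 + 𝔠) * 𝔠 := by
          gcongr
          exact (Cardinal.one_le_aleph0).trans aleph0_le_continuum
      _ = 𝔠 := by simp
  · intro j s hs
    choose t ht using hs
    refine ⟨WType.mk (some j) t, ?_⟩
    change Φ j (fun n => ev (t n)) = _
    simp [ht]


theorem exists_omega1 : ∃ (Ω : Type 1) (_ : LinearOrder Ω), WellFoundedLT Ω ∧ Uncountable Ω ∧
    ∀ i : Ω, (Iic i).Countable := by
  refine ⟨Set.Iio (Ordinal.omega.{0} 1), inferInstance, inferInstance, ?_, ?_⟩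
  · rw [← Cardinal.aleph0_lt_mk_iff, Cardinal.mk_Iio_ordinal]
    simp
  · rintro ⟨i, hi⟩
    have h1 : (Set.Iio (Order.succ i)).Countable := by
      rw [← Cardinal.le_aleph0_iff_set_countable, Cardinal.mk_Iio_ordinal]
      have h2 : Order.succ i < Ordinal.omega 1 :=
        (Cardinal.isSuccLimit_omega 1).succ_lt hi
      have h3 : (Order.succ i).card < ℵ₁ := by
        rw [← Cardinal.lt_ord]
        simpa using h2
      rw [← Cardinal.succ_aleph0, Order.lt_succ_iff] at h3
      rw [← Cardinal.lift_aleph0.{1, 0}, Cardinal.lift_le]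
      exact h3
    have h2 : (Subtype.val '' (Iic (⟨i, hi⟩ : Set.Iio (Ordinal.omega.{0} 1)))).Countable := by
      refine h1.mono ?_
      rintro _ ⟨y, hy, rfl⟩
      have hy' : y ≤ ⟨i, hi⟩ := hy
      exact Order.lt_succ_iff.2 (Subtype.coe_le_coe.2 hy')
    exact (Set.countable_of_injective_of_countable_image Subtype.val_injective.injOn h2)

theorem discrete_of_nhds {X : Type u} [TopologicalSpace X] (D : Set X)
    (h : ∀ x ∈ D, ∃ U, IsOpen U ∧ x ∈ U ∧ ∀ y ∈ D, y ∈ U → y = x) : DiscreteTopology D := by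
  rw [discreteTopology_iff_isOpen_singleton]
  rintro ⟨x, hx⟩
  obtain ⟨U, hU, hxU, h1⟩ := h x hx
  refine ⟨U, hU, ?_⟩
  ext ⟨y, hy⟩
  simp only [mem_preimage, mem_singleton_iff, Subtype.mk.injEq]
  exact ⟨h1 y hy, fun h => h ▸ hxU⟩

theorem main {X : Type u} [TopologicalSpace X] [T2Space X] [FirstCountableTopology X]
    (hADL : AlmostDiscretelyLindelof X)
    (H : ∀ s : ℕ → X, ∃ O : (Quotient.out (𝔠 : Cardinal.{u})) → Set X,
      (∀ i, IsOpen (O i) ∧ closure (range s) ⊆ O i) ∧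
      ∀ p, p ∉ closure (range s) → ∃ i, p ∉ O i) : #X ≤ 𝔠 := by
  classical
  rcases isEmpty_or_nonempty X with hX | ⟨⟨x0⟩⟩
  · simp
  have hXne : Nonempty X := ⟨x0⟩
  set I := Quotient.out (𝔠 : Cardinal.{u}) with hI
  have hIc : #I = 𝔠 := Cardinal.mk_out _
  have : Nonempty I := by
    rw [← Cardinal.mk_ne_zero_iff, hIc]; exact continuum_ne_zero
  choose O hO hOp using H
  let Φ : Option (ℕ → I) → (ℕ → X) → X := fun a s => match a with
    | none => if h : ∃ x, Tendsto s atTop (𝓝 x) then h.choose else x0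
    | some c => if h : ∃ x, ∀ n, x ∉ O (fun m => s (Nat.pair n m)) (c n) then h.choose else x0
  have hJ : #(Option (ℕ → I)) ≤ 𝔠 := by
    rw [Cardinal.mk_option]
    calc #(ℕ → I) + 1 ≤ 𝔠 + 𝔠 := by
          gcongr
          · exact mk_seq_le hIc.le
          · exact (Cardinal.one_le_aleph0).trans aleph0_le_continuum
      _ = 𝔠 := by simp
  obtain ⟨M, hx0, hMc, hM⟩ := exists_hull hJ Φ x0
  by_cases hp : ∃ p, p ∉ M
  swap
  · push Not at hp
    have : M = Set.univ := eq_univ_of_forall hp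
    rw [this, Cardinal.mk_univ] at hMc
    exact hMc
  exfalso
  obtain ⟨p, hp⟩ := hp
  have hcl : ∀ A ⊆ M, closure A ⊆ M := by
    intro A hA x hx
    obtain ⟨s, hs, ht⟩ := mem_closure_iff_seq_limit.1 hx
    have h1 := hM none s (fun n => hA (hs n))
    have h2 : ∃ x, Tendsto s atTop (𝓝 x) := ⟨x, ht⟩
    have h3 : Φ none s = h2.choose := dif_pos h2
    rw [h3, tendsto_nhds_unique h2.choose_spec ht] at h1
    exact h1
  let P : Set X → Prop := fun A => A.Countable ∧ A ⊆ M ∧ A.Nonempty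
  have hg : ∀ A, P A → ∃ (s : ℕ → X) (i : I), range s = A ∧ p ∉ O s i := by
    rintro A ⟨h1, h2, h3⟩
    obtain ⟨s, rfl⟩ := h1.exists_eq_range h3
    obtain ⟨i, hi⟩ := hOp s p (fun h => hp (hcl _ h2 h))
    exact ⟨s, i, rfl, hi⟩
  choose! sA iA hsA hiA using hg
  let g : Set X → Set X := fun A => O (sA A) (iA A)
  have hgo : ∀ A, IsOpen (g A) := fun A => (hO _ _).1
  have hgc : ∀ A, P A → closure A ⊆ g A := fun A hA => by
    have := (hO (sA A) (iA A)).2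
    rwa [hsA A hA] at this
  have hψ : ∀ 𝒜 : Set (Set X), (𝒜.Countable ∧ 𝒜.Nonempty ∧ ∀ A ∈ 𝒜, P A) →
      ∃ x, x ∈ M ∧ ∀ A ∈ 𝒜, x ∉ g A := by
    rintro 𝒜 ⟨h1, h2, h3⟩
    obtain ⟨a, rfl⟩ := h1.exists_eq_range h2
    let s : ℕ → X := fun k => sA (a k.unpair.1) k.unpair.2
    have hs : ∀ n, s n ∈ M := by
      intro n
      have h4 := h3 (a n.unpair.1) (mem_range_self _)
      apply h4.2.1
      rw [← hsA _ h4]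
      exact mem_range_self _
    have hs2 : ∀ n, (fun m => s (Nat.pair n m)) = sA (a n) := by
      intro n; ext m; simp [s]
    have h5 : ∃ x, ∀ n, x ∉ O (fun m => s (Nat.pair n m)) (iA (a n)) := by
      refine ⟨p, fun n => ?_⟩
      rw [hs2]
      exact hiA _ (h3 _ (mem_range_self _))
    have h6 : Φ (some fun n => iA (a n)) s = h5.choose := dif_pos h5
    refine ⟨h5.choose, ?_, ?_⟩
    · rw [← h6]; exact hM (some fun n => iA (a n)) s hs
    · rintro _ ⟨n, rfl⟩
      have := h5.choose_spec n
      rwa [hs2] at this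
  choose! ψ hψM hψg using hψ
  obtain ⟨Ω, _, hwf, hunc, hcount⟩ := exists_omega1
  let F : (i : Ω) → ((j : Ω) → j < i → X) → X := fun i ih =>
    ψ (insert (insert x0 {y | ∃ k, ∃ h : k < i, ih k h = y})
      {A | ∃ j, ∃ hj : j < i, insert x0 {y | ∃ k, ∃ h : k ≤ j, ih k (h.trans_lt hj) = y} = A})
  let x : Ω → X := hwf.wf.fix F
  let 𝒜 : Ω → Set (Set X) := fun i =>
    insert (insert x0 (x '' Iio i)) ((fun j => insert x0 (x '' Iic j)) '' Iio i)
  have hxeq : ∀ i, x i = ψ (𝒜 i) := by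
    intro i
    have h1 : x i = F i (fun j _ => x j) := hwf.wf.fix_eq F i
    rw [h1]
    simp only [F, 𝒜, Set.image, mem_Iio, mem_Iic, exists_prop]
  have hIio : ∀ i : Ω, (Iio i).Countable := fun i => (hcount i).mono Iio_subset_Iic_self
  have hP : ∀ T : Set Ω, T.Countable → (∀ k ∈ T, x k ∈ M) → P (insert x0 (x '' T)) := by
    intro T hT hTM
    refine ⟨(hT.image x).insert x0, ?_, insert_nonempty _ _⟩
    rintro y (rfl | ⟨k, hk, rfl⟩)
    · exact hx0
    · exact hTM k hk
  have h𝒜 : ∀ i, (∀ k < i, x k ∈ M) →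
      ((𝒜 i).Countable ∧ (𝒜 i).Nonempty ∧ ∀ A ∈ 𝒜 i, P A) := by
    intro i hi
    refine ⟨((hIio i).image _).insert _, insert_nonempty _ _, ?_⟩
    rintro A (rfl | ⟨j, hj, rfl⟩)
    · exact hP _ (hIio i) hi
    · exact hP _ (hcount j) (fun k hk => hi k (lt_of_le_of_lt hk hj))
  have hxM : ∀ i, x i ∈ M := by
    intro i
    induction i using hwf.wf.induction with
    | _ i ih =>
      rw [hxeq]
      exact hψM _ (h𝒜 i ih)
  have hPlt : ∀ i, P (insert x0 (x '' Iio i)) := fun i => hP _ (hIio i) fun k _ => hxM k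
  have hPle : ∀ i, P (insert x0 (x '' Iic i)) := fun i => hP _ (hcount i) fun k _ => hxM k
  have hxg : ∀ i, ∀ A ∈ 𝒜 i, x i ∉ g A := by
    intro i A hA
    rw [hxeq]
    exact hψg _ (h𝒜 i fun k _ => hxM k) A hA
  have hlt : ∀ i, x i ∉ closure (x '' Iio i) := by
    intro i hi
    refine hxg i _ (mem_insert _ _) (hgc _ (hPlt i) ?_)
    exact closure_mono (subset_insert _ _) hi
  have hle : ∀ i j, i < j → x j ∉ g (insert x0 (x '' Iic i)) := by
    intro i j hij
    exact hxg j _ (mem_insert_of_mem _ ⟨i, hij, rfl⟩)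
  have hsub : ∀ i, closure (x '' Iic i) ⊆ g (insert x0 (x '' Iic i)) := fun i =>
    (closure_mono (subset_insert _ _)).trans (hgc _ (hPle i))
  have hdisc : DiscreteTopology (range x) := by
    apply discrete_of_nhds
    rintro _ ⟨i, rfl⟩
    refine ⟨g (insert x0 (x '' Iic i)) ∩ (closure (x '' Iio i))ᶜ,
      (hgo _).inter isClosed_closure.isOpen_compl,
      ⟨hsub i (subset_closure ⟨i, le_rfl, rfl⟩), hlt i⟩, ?_⟩
    rintro _ ⟨j, rfl⟩ ⟨h1, h2⟩
    rcases lt_trichotomy j i with h | h | h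
    · exact absurd (subset_closure (mem_image_of_mem x (mem_Iio.2 h))) h2
    · rw [h]
    · exact absurd h1 (hle i j h)
  obtain ⟨Y, hDY, hY⟩ := hADL _ hdisc
  have hnb : ∀ q, ∃ U, U ∈ 𝓝 q ∧ {i | x i ∈ U}.Countable := by
    intro q
    by_cases hq : q ∈ closure (range x)
    · obtain ⟨s, hs, ht⟩ := mem_closure_iff_seq_limit.1 hq
      choose t hts using hs
      have hb : ∃ j, ∀ n, t n ≤ j := by
        by_contra! hcon
        have : (Set.univ : Set Ω) ⊆ ⋃ n, Iic (t n) := by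
          intro j _
          obtain ⟨n, hn⟩ := hcon j
          exact mem_iUnion.2 ⟨n, hn.le⟩
        exact not_countable_univ ((countable_iUnion fun n => hcount (t n)).mono this)
      obtain ⟨j, hj⟩ := hb
      refine ⟨g (insert x0 (x '' Iic j)), (hgo _).mem_nhds (hsub j ?_), ?_⟩
      · exact mem_closure_of_tendsto ht (Eventually.of_forall fun n => ⟨t n, hj n, hts n⟩)
      · refine (hcount j).mono fun i hi => ?_
        by_contra hij
        exact hle j i (not_le.1 hij) hi
    · refine ⟨(closure (range x))ᶜ, isClosed_closure.isOpen_compl.mem_nhds hq, ?_⟩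
      convert countable_empty
      ext i
      simp only [mem_ofPred_eq, mem_compl_iff, mem_empty_iff_false, iff_false, not_not]
      exact subset_closure (mem_range_self i)
  choose U hU hUc using hnb
  obtain ⟨t, htc, -, ht⟩ := hY.elim_nhds_subcover U (fun q _ => hU q)
  refine not_countable_univ (α := Ω) ((htc.biUnion fun q _ => hUc q).mono ?_)
  intro i _
  obtain ⟨q, hq, hi⟩ := mem_iUnion₂.1 (ht (hDY (mem_range_self i)))
  exact mem_iUnion₂.2 ⟨q, hq, hi⟩

theorem lindelof_card {X : Type u} [TopologicalSpace X] [T3Space X] [FirstCountableTopology X]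
    [LindelofSpace X] : #X ≤ 𝔠 := by
  apply main
  · intro D _
    exact ⟨Set.univ, subset_univ _, isLindelof_univ⟩
  intro s
  let Fs := closure (range s)
  have hFc : #Fs ≤ 𝔠 := mk_closure_le _
    ((Cardinal.le_aleph0_iff_set_countable.2 (countable_range s)).trans aleph0_le_continuum)
  have hb : ∀ x : X, ∃ B : ℕ → Set X, (𝓝 x).HasAntitoneBasis B := fun x =>
    (𝓝 x).exists_antitone_basis
  choose B hB using hb
  let fam : (ℕ → Fs × ℕ) → Set X := fun e => ⋃ n, interior (B (e n).1 (e n).2)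
  let S : Set (Set X) := insert Set.univ ({A | Fs ⊆ A} ∩ range fam)
  have hS : #S ≤ 𝔠 := by
    refine (Cardinal.mk_insert_le).trans ?_
    calc _ ≤ 𝔠 + 𝔠 := by
          gcongr
          · refine (Cardinal.mk_le_mk_of_subset inter_subset_right).trans ?_
            refine Cardinal.mk_range_le.trans (mk_seq_le ?_)
            rw [Cardinal.mk_prod]
            calc _ ≤ 𝔠 * 𝔠 := by
                  gcongr
                  · simpa using hFc
                  · simpa using aleph0_le_continuum
              _ = 𝔠 := by simp
          · exact (Cardinal.one_le_aleph0).trans aleph0_le_continuum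
      _ = 𝔠 := by simp
  obtain ⟨O, hO⟩ := exists_param S ⟨Set.univ, mem_insert _ _⟩ hS
  refine ⟨O, ?_, ?_⟩
  · intro i
    have : O i ∈ S := hO ▸ mem_range_self i
    rcases this with h | ⟨h1, e, he⟩
    · rw [h]; exact ⟨isOpen_univ, subset_univ _⟩
    · refine ⟨?_, h1⟩
      rw [← he]
      exact isOpen_iUnion fun n => isOpen_interior
  · intro p hp
    have h1 : ∀ x : Fs, ∃ n, p ∉ B x n := by
      intro x
      have hne : p ≠ x := fun h => hp (h ▸ x.2)
      obtain ⟨n, -, hn⟩ := (hB x).1.mem_iff.1 (compl_singleton_mem_nhds hne.symm)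
      exact ⟨n, fun h => hn h rfl⟩
    choose k hk using h1
    have hL : IsLindelof Fs := isClosed_closure.isLindelof
    obtain ⟨r, hr, hr2⟩ := hL.elim_countable_subcover (fun x : Fs => interior (B x (k x)))
      (fun _ => isOpen_interior) (fun x hx => mem_iUnion.2 ⟨⟨x, hx⟩,
        mem_interior_iff_mem_nhds.2 ((hB x).1.mem_of_mem trivial)⟩)
    have hrne : r.Nonempty := by
      obtain ⟨x, hx, -⟩ := mem_iUnion₂.1 (hr2 (subset_closure (mem_range_self 0)))
      exact ⟨x, hx⟩
    obtain ⟨a, rfl⟩ := hr.exists_eq_range hrne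
    have h2 : fam (fun n => (a n, k (a n))) ∈ S := by
      refine mem_insert_of_mem _ ⟨?_, mem_range_self _⟩
      simpa [fam] using hr2
    rw [← hO] at h2
    obtain ⟨i, hi⟩ := h2
    refine ⟨i, ?_⟩
    rw [hi]
    simp only [fam, mem_iUnion, not_exists]
    exact fun n h => hk _ (interior_subset h)

theorem shap {X : Type u} [TopologicalSpace X] (Fs : Set X) (V : X → Set X)
    (hV : ∀ x, x ∉ Fs → IsOpen (V x) ∧ x ∈ V x) :
    ∃ D : Set X, DiscreteTopology D ∧ D ⊆ Fsᶜ ∧ Fsᶜ ⊆ closure D ∪ ⋃ x ∈ D, V x := by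
  obtain ⟨_, hwf⟩ := exists_wellFoundedLT X
  let G : (x : X) → ((y : X) → y < x → Prop) → Prop := fun x ih =>
    x ∉ Fs ∧ x ∉ closure {y | ∃ h : y < x, ih y h} ∧ ∀ y, ∀ h : y < x, ih y h → x ∉ V y
  let d : X → Prop := hwf.wf.fix G
  have hd : ∀ x, d x ↔ (x ∉ Fs ∧ x ∉ closure {y | y < x ∧ d y} ∧ ∀ y, y < x → d y → x ∉ V y) := by
    intro x
    have h1 : d x = G x (fun y _ => d y) := hwf.wf.fix_eq G x
    rw [h1]
    simp only [G, exists_prop]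
  refine ⟨{x | d x}, ?_, fun x hx => ((hd x).1 hx).1, ?_⟩
  · apply discrete_of_nhds
    intro x hx
    obtain ⟨h1, h2, h3⟩ := (hd x).1 hx
    refine ⟨V x ∩ (closure {y | y < x ∧ d y})ᶜ,
      (hV x h1).1.inter isClosed_closure.isOpen_compl, ⟨(hV x h1).2, h2⟩, ?_⟩
    rintro y hy ⟨hy1, hy2⟩
    rcases lt_trichotomy y x with h | h | h
    · exact absurd (subset_closure (show y ∈ {y | y < x ∧ d y} from ⟨h, hy⟩)) hy2
    · exact h
    · exact absurd hy1 (((hd y).1 hy).2.2 x h hx)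
  · intro x hx
    by_contra hcon
    simp only [mem_union, mem_iUnion, not_or, not_exists, mem_ofPred_eq] at hcon
    have : d x := (hd x).2 ⟨hx, fun h => hcon.1 (closure_mono (fun y hy => hy.2) h),
      fun y _ hy => hcon.2 y hy⟩
    exact hcon.1 (subset_closure this)

end ADL

theorem firstCountable_almostDiscretelyLindelof_card_le_continuum
    {X : Type u} [TopologicalSpace X] [T3Space X]
    [FirstCountableTopology X]
    (hADL : AlmostDiscretelyLindelof X) :
    #X ≤ 2 ^ (ℵ₀ : Cardinal.{u}) := by
  rw [Cardinal.two_power_aleph0]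
  have hdc : ∀ D : Set X, DiscreteTopology D → #D ≤ 𝔠 := by
    intro D hD
    obtain ⟨Y, hDY, hY⟩ := hADL D hD
    have : LindelofSpace Y := isLindelof_iff_lindelofSpace.1 hY
    exact (Cardinal.mk_le_mk_of_subset hDY).trans ADL.lindelof_card
  apply ADL.main hADL
  intro s
  let Fs := closure (range s)
  have hV : ∀ x, ∃ V : Set X, x ∉ Fs → IsOpen V ∧ x ∈ V ∧ Disjoint (closure V) Fs := by
    intro x
    by_cases hx : x ∈ Fs
    · exact ⟨∅, fun h => absurd hx h⟩
    · obtain ⟨W, hW, hWc, hWs⟩ := exists_mem_nhds_isClosed_subset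
        ((isClosed_closure (s := range s)).isOpen_compl.mem_nhds hx)
      refine ⟨interior W, fun _ => ⟨isOpen_interior, mem_interior_iff_mem_nhds.2 hW, ?_⟩⟩
      rw [← subset_compl_iff_disjoint_right]
      exact (closure_minimal interior_subset hWc).trans hWs
  choose V hV using hV
  obtain ⟨D, hD, hDF, hcov⟩ := ADL.shap Fs V (fun x hx => ⟨(hV x hx).1, (hV x hx).2.1⟩)
  have hDc := hdc D hD
  let S : Set (Set X) := insert Set.univ
    (((fun x => (closure (V x))ᶜ) '' D) ∪ ((fun x => {x}ᶜ) '' (closure D \ Fs)))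
  have hS : #S ≤ 𝔠 := by
    refine (Cardinal.mk_insert_le).trans ?_
    calc _ ≤ (𝔠 + 𝔠) + 𝔠 := by
          gcongr
          · refine (Cardinal.mk_union_le _ _).trans ?_
            gcongr
            · exact Cardinal.mk_image_le.trans hDc
            · exact Cardinal.mk_image_le.trans ((Cardinal.mk_le_mk_of_subset sdiff_subset).trans
                (ADL.mk_closure_le D hDc))
          · exact (Cardinal.one_le_aleph0).trans aleph0_le_continuum
      _ = 𝔠 := by simp
  obtain ⟨O, hO⟩ := ADL.exists_param S ⟨Set.univ, mem_insert _ _⟩ hS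
  refine ⟨O, ?_, ?_⟩
  · intro i
    have : O i ∈ S := hO ▸ mem_range_self i
    rcases this with h | ⟨x, hx, h⟩ | ⟨x, hx, h⟩
    · rw [h]; exact ⟨isOpen_univ, subset_univ _⟩
    · rw [← h]
      exact ⟨isClosed_closure.isOpen_compl,
        subset_compl_iff_disjoint_left.2 (hV x (hDF hx)).2.2⟩
    · rw [← h]
      exact ⟨isOpen_compl_singleton, fun y hy hyx => hx.2 (hyx ▸ hy)⟩
  · intro p hp
    suffices h : ∃ A ∈ S, p ∉ A by
      obtain ⟨A, hA, hpA⟩ := h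
      rw [← hO] at hA
      obtain ⟨i, rfl⟩ := hA
      exact ⟨i, hpA⟩
    rcases hcov hp with h | h
    · exact ⟨{p}ᶜ, Or.inr (Or.inr ⟨p, ⟨h, hp⟩, rfl⟩), fun h => h rfl⟩
    · obtain ⟨x, hx, hpx⟩ := mem_iUnion₂.1 h
      exact ⟨(closure (V x))ᶜ, Or.inr (Or.inl ⟨x, hx, rfl⟩), fun h => h (subset_closure hpx)⟩
end

section
/- Let X be a Hausdorff (T2) topological space and κ an infinite cardinal. Assume X is almost discretely Lindelöf, the tightness of X is at most κ, and the pseudocharacter of X is at most κ. Then every subset D ⊆ X that is discrete in the subspace topology has cardinality at most 2^κ. -/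
open Cardinal Set Filter Topology

theorem aux_closing {Y : Type u} (κ : Cardinal.{u}) (hκ : ℵ₀ ≤ κ) (F : Set Y → Set Y)
    (hF : ∀ A : Set Y, #A ≤ 2 ^ κ → #(F A) ≤ 2 ^ κ) :
    ∃ H : Set Y, #H ≤ 2 ^ κ ∧ ∀ B ⊆ H, #B ≤ κ → ∃ A, B ⊆ A ∧ A ⊆ H ∧ F A ⊆ H := by
  classical
  let I := (Order.succ κ).ord.ToType
  have hI : #I = Order.succ κ := by simp [I]
  have hIio : ∀ i : I, #(Iio i) ≤ κ := fun i => Order.lt_succ_iff.1 (mk_Iio_toType_ord_lt i)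
  have hκ2 : κ ≤ 2 ^ κ := (cantor κ).le
  have h2 : ℵ₀ ≤ (2 : Cardinal.{u}) ^ κ := hκ.trans hκ2
  let G : I → Set Y := (wellFounded_lt (α := I)).fix
    (fun i rec => F (⋃ j : Iio i, rec j.1 j.2))
  have hG : ∀ i, G i = F (⋃ j : Iio i, G j.1) := fun i =>
    (wellFounded_lt (α := I)).fix_eq _ i
  have hun : ∀ i, (∀ j : Iio i, #(G j.1) ≤ 2 ^ κ) → #(⋃ j : Iio i, G j.1) ≤ 2 ^ κ := by
    intro i h
    refine (mk_iUnion_le _).trans ?_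
    calc #(Iio i) * (⨆ j : Iio i, #(G j.1)) ≤ 2 ^ κ * 2 ^ κ :=
          mul_le_mul' ((hIio i).trans hκ2) (ciSup_le' h)
      _ = 2 ^ κ := mul_eq_self h2
  have hcard : ∀ i, #(G i) ≤ 2 ^ κ := by
    intro i
    induction i using (wellFounded_lt (α := I)).induction with
    | _ i ih =>
      rw [hG]
      exact hF _ (hun i fun j => ih j.1 j.2)
  refine ⟨⋃ i, G i, ?_, ?_⟩
  · refine (mk_iUnion_le _).trans ?_
    calc #I * (⨆ j : I, #(G j)) ≤ 2 ^ κ * 2 ^ κ :=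
          mul_le_mul' (hI.le.trans (Order.succ_le_of_lt (cantor κ))) (ciSup_le' hcard)
      _ = 2 ^ κ := mul_eq_self h2
  · intro B hB hBκ
    have : ∀ b : B, ∃ i, b.1 ∈ G i := fun b => mem_iUnion.1 (hB b.2)
    choose e he using this
    have hIic : ∀ i : I, #(Iic i) ≤ κ := by
      intro i
      rw [← Iio_insert]
      refine (mk_insert_le).trans ?_
      exact (add_le_add (hIio i) (one_le_aleph0.trans hκ)).trans (add_eq_self hκ).le
    have hne : (⋃ b : B, Iic (e b)) ≠ Set.univ := by
      intro h
      have h1 : #(⋃ b : B, Iic (e b)) ≤ κ := by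
        refine (mk_iUnion_le _).trans ?_
        calc _ ≤ κ * κ := mul_le_mul' hBκ (ciSup_le' fun b => hIic _)
          _ = κ := mul_eq_self hκ
      rw [h, mk_univ, hI] at h1
      exact absurd h1 (not_le.2 (Order.lt_succ κ))
    obtain ⟨i, hi⟩ := (ne_univ_iff_exists_notMem _).1 hne
    simp only [mem_iUnion, mem_Iic, not_exists, not_le] at hi
    refine ⟨⋃ j : Iio i, G j.1, ?_, ?_, ?_⟩
    · intro b hb
      exact mem_iUnion.2 ⟨⟨e ⟨b, hb⟩, hi _⟩, he ⟨b, hb⟩⟩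
    · exact iUnion_subset fun j => subset_iUnion G j.1
    · rw [← hG]
      exact subset_iUnion G i

/-- Nonempty families of size at most `#K` are ranges of functions on `K`. -/
theorem aux_range {α K : Type u} {s : Set α} (hs : s.Nonempty) (h : #s ≤ #K) :
    ∃ g : K → α, range g = s := by
  obtain ⟨f⟩ := h
  have := hs.to_subtype
  refine ⟨fun k => (Function.invFun f k).1, ?_⟩
  have := (Function.invFun_surjective f.injective).range_eq
  rw [show (fun k => (Function.invFun f k).1) = Subtype.val ∘ Function.invFun f from rfl,
    range_comp, this]
  simp

theorem aux_psi_c {Y : Type u} [TopologicalSpace Y] [T2Space Y] [LindelofSpace Y] {K : Type u}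
    (hK : ℵ₀ ≤ #K) (x : Y) (u : K → Set Y) (huo : ∀ k, IsOpen (u k)) (hu : ⋂ k, u k = {x}) :
    ∃ v : K → Set Y, (∀ k, IsOpen (v k)) ∧ (∀ k, x ∈ v k) ∧ ⋂ k, closure (v k) = {x} := by
  classical
  have h1 : ∀ y : Y, ∃ V : Set Y, IsOpen V ∧ x ∈ V ∧ (y ≠ x → y ∉ closure V) := by
    intro y
    by_cases h : y = x
    · exact ⟨Set.univ, isOpen_univ, mem_univ _, fun h' => absurd h h'⟩
    · obtain ⟨V, W, hV, hW, hxV, hyW, hd⟩ := t2_separation (Ne.symm h)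
      refine ⟨V, hV, hxV, fun _ hy => ?_⟩
      exact (hd.closure_left hW).le_bot ⟨hy, hyW⟩
  choose V hVo hxV hV using h1
  have h2 : ∀ k, ∃ t : Set Y, t.Countable ∧ (u k)ᶜ ⊆ ⋃ y ∈ t, (closure (V y))ᶜ := by
    intro k
    have hL : IsLindelof ((u k)ᶜ) := (huo k).isClosed_compl.isLindelof
    obtain ⟨t, ht, hc⟩ := hL.elim_countable_subcover
      (fun y : ((u k)ᶜ : Set Y) => (closure (V y))ᶜ)
      (fun y => isClosed_closure.isOpen_compl) (by
        intro y hy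
        refine mem_iUnion.2 ⟨⟨y, hy⟩, hV y ?_⟩
        rintro rfl
        have : y ∈ ⋂ k, u k := by rw [hu]; rfl
        exact hy (mem_iInter.1 this k))
    refine ⟨Subtype.val '' t, ht.image _, hc.trans ?_⟩
    simp
  choose t ht hc using h2
  let S : Set (Set Y) := insert Set.univ (⋃ k, V '' t k)
  have hS : #S ≤ #K := by
    refine mk_insert_le.trans ?_
    have : #(⋃ k, V '' t k) ≤ #K := by
      refine (mk_iUnion_le _).trans ?_
      calc _ ≤ #K * #K := mul_le_mul' le_rfl (ciSup_le' fun k =>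
              (((ht k).image V).le_aleph0).trans hK)
        _ = #K := mul_eq_self hK
    exact (add_le_add this (one_le_aleph0.trans hK)).trans (add_eq_self hK).le
  obtain ⟨v, hv⟩ := aux_range (s := S) ⟨Set.univ, mem_insert _ _⟩ hS
  have hvS : ∀ k, IsOpen (v k) ∧ x ∈ v k := by
    intro k
    have : v k ∈ S := hv ▸ mem_range_self k
    rcases this with h | h
    · rw [h]; exact ⟨isOpen_univ, mem_univ _⟩
    · obtain ⟨l, y, -, h⟩ := mem_iUnion.1 h
      rw [← h]; exact ⟨hVo y, hxV y⟩
  refine ⟨v, fun k => (hvS k).1, fun k => (hvS k).2, ?_⟩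
  apply Subset.antisymm
  · intro z hz
    rw [← hu]
    refine mem_iInter.2 fun k => ?_
    by_contra hzk
    obtain ⟨y, hyt, hzy⟩ := mem_iUnion₂.1 (hc k hzk)
    have : V y ∈ range v := by
      rw [hv]; exact Or.inr (mem_iUnion.2 ⟨k, y, hyt, rfl⟩)
    obtain ⟨l, hl⟩ := this
    exact hzy (hl ▸ mem_iInter.1 hz l)
  · rintro _ rfl
    exact mem_iInter.2 fun k => subset_closure (hvS k).2

theorem aux_closure {Y : Type u} [TopologicalSpace Y] {K : Type u}
    (hK : ℵ₀ ≤ #K)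
    (htight : ∀ A : Set Y, ∀ x ∈ closure A, ∃ B ⊆ A, #B ≤ #K ∧ x ∈ closure B)
    (v : Y → K → Set Y) (hvo : ∀ x k, IsOpen (v x k)) (hxv : ∀ x k, x ∈ v x k)
    (hv : ∀ x, ⋂ k, closure (v x k) = {x}) (A : Set Y) (hA : #A ≤ 2 ^ #K) :
    #(closure A) ≤ 2 ^ #K := by
  classical
  have h1 : ∀ x : closure A, ∃ g : K → A, x.1 ∈ closure (range fun k => (g k).1) := by
    rintro ⟨x, hx⟩
    obtain ⟨B, hBA, hB, hxB⟩ := htight A x hx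
    have hne : B.Nonempty := closure_nonempty_iff.1 ⟨x, hxB⟩
    obtain ⟨g, hg⟩ := aux_range hne hB
    exact ⟨fun k => ⟨g k, hBA (hg ▸ mem_range_self k)⟩, by simpa [hg] using hxB⟩
  choose g hg using h1
  let S : closure A → K → Set K := fun x k => {l | (g x l).1 ∈ v x k}
  have key : ∀ x : closure A, ⋂ k, closure ((fun l => (g x l).1) '' S x k) = {x.1} := by
    intro x
    apply Subset.antisymm
    · rw [← hv x.1]
      refine iInter_mono fun k => closure_mono ?_
      rintro _ ⟨l, hl, rfl⟩
      exact hl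
    · rintro _ rfl
      refine mem_iInter.2 fun k => ?_
      have := (hvo x.1 k).inter_closure ⟨hxv x.1 k, hg x⟩
      refine closure_mono ?_ this
      rintro _ ⟨h, l, rfl⟩
      exact ⟨l, h, rfl⟩
  have hinj : Function.Injective (fun x : closure A => (g x, S x)) := by
    intro x y h
    have hg' : g x = g y := congrArg Prod.fst h
    have hS' : S x = S y := congrArg Prod.snd h
    have := key x
    rw [hg', hS', key y] at this
    exact Subtype.ext (singleton_injective this).symm
  refine (mk_le_of_injective hinj).trans ?_
  have h2 : ℵ₀ ≤ (2 : Cardinal.{u}) ^ #K := hK.trans (cantor _).le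
  have h3 : ((2 : Cardinal.{u}) ^ #K) ^ #K = 2 ^ #K := by rw [← power_mul, mul_eq_self hK]
  calc #((K → A) × (K → Set K)) = #A ^ #K * (2 ^ #K) ^ #K := by simp
    _ ≤ (2 ^ #K) ^ #K * (2 ^ #K) ^ #K := mul_le_mul' (power_le_power_right hA) le_rfl
    _ = 2 ^ #K := by rw [h3, mul_eq_self h2]

/-- Shapirovskii's theorem. -/
theorem aux_shap {Y : Type u} [TopologicalSpace Y] [T2Space Y] [LindelofSpace Y] {K : Type u}
    (hK : ℵ₀ ≤ #K)
    (htight : ∀ A : Set Y, ∀ x ∈ closure A, ∃ B ⊆ A, #B ≤ #K ∧ x ∈ closure B)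
    (u : Y → K → Set Y) (huo : ∀ x k, IsOpen (u x k)) (hu : ∀ x, ⋂ k, u x k = {x}) :
    #Y ≤ 2 ^ #K := by
  classical
  rcases isEmpty_or_nonempty Y with hY | ⟨⟨y0⟩⟩
  · simp
  choose v hvo hxv hv using fun x => aux_psi_c hK x (u x) (huo x) (hu x)
  have h2 : ℵ₀ ≤ (2 : Cardinal.{u}) ^ #K := hK.trans (cantor _).le
  have h3 : ((2 : Cardinal.{u}) ^ #K) ^ #K = 2 ^ #K := by rw [← power_mul, mul_eq_self hK]
  have hf : ∀ W : Set Y, ∃ p : Y, W ≠ Set.univ → p ∉ W := by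
    intro W
    by_cases h : W = Set.univ
    · exact ⟨y0, fun h' => absurd h h'⟩
    · obtain ⟨p, hp⟩ := (ne_univ_iff_exists_notMem _).1 h
      exact ⟨p, fun _ => hp⟩
  choose f hf using hf
  let F : Set Y → Set Y := fun A => insert y0 (closure A ∪
    range (fun c : K → A × K => f (⋃ k, u (c k).1 (c k).2)))
  obtain ⟨H, hH, hcl⟩ := aux_closing #K hK F (by
    intro A hA
    refine mk_insert_le.trans ?_
    have e1 := aux_closure hK htight v hvo hxv hv A hA
    have e2 : #(range (fun c : K → A × K => f (⋃ k, u (c k).1 (c k).2))) ≤ 2 ^ #K := by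
      refine mk_range_le.trans ?_
      calc #(K → A × K) = (#A * #K) ^ #K := by simp
        _ ≤ (2 ^ #K * 2 ^ #K) ^ #K := power_le_power_right (mul_le_mul' hA (cantor _).le)
        _ = 2 ^ #K := by rw [mul_eq_self h2, h3]
    have e3 := (mk_union_le _ _).trans ((add_le_add e1 e2).trans (add_eq_self h2).le)
    exact (add_le_add e3 (one_le_aleph0.trans h2)).trans (add_eq_self h2).le)
  have hy0 : y0 ∈ H := by
    obtain ⟨A, -, -, hA⟩ := hcl ∅ (empty_subset _) (by simp)
    exact hA (mem_insert _ _)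
  have hclosed : IsClosed H := by
    refine isClosed_of_closure_subset fun x hx => ?_
    obtain ⟨B, hBH, hB, hxB⟩ := htight H x hx
    obtain ⟨A, hBA, -, hA⟩ := hcl B hBH hB
    exact hA (Or.inr (Or.inl (closure_mono hBA hxB)))
  have huniv : H = Set.univ := by
    by_contra hne
    obtain ⟨y, hy⟩ := (ne_univ_iff_exists_notMem _).1 hne
    have : ∀ x : H, ∃ k, y ∉ u x k := by
      intro x
      by_contra! h
      have : y ∈ ⋂ k, u x k := mem_iInter.2 h
      rw [hu] at this
      exact hy (this ▸ x.2)
    choose k hk using this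
    have hxu : ∀ x k, x ∈ u x k := fun x k => by
      have : x ∈ ⋂ k, u x k := by rw [hu]; rfl
      exact mem_iInter.1 this k
    obtain ⟨t, ht, hcov⟩ := hclosed.isLindelof.elim_countable_subcover
      (fun x : H => u x (k x)) (fun x => huo _ _)
      (fun x hx => mem_iUnion.2 ⟨⟨x, hx⟩, hxu _ _⟩)
    have htne : t.Nonempty := by
      obtain ⟨x, hx, -⟩ := mem_iUnion₂.1 (hcov hy0)
      exact ⟨x, hx⟩
    obtain ⟨g, hg⟩ := aux_range (K := K) htne (ht.le_aleph0.trans hK)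
    obtain ⟨A, hBA, -, hA⟩ := hcl (Subtype.val '' t) (by simp)
      ((ht.image _).le_aleph0.trans hK)
    have hgt : ∀ l, g l ∈ t := fun l => hg ▸ mem_range_self l
    let c : K → A × K := fun l => (⟨(g l).1, hBA ⟨g l, hgt l, rfl⟩⟩, k (g l))
    have hp : f (⋃ l, u (c l).1 (c l).2) ∈ H := hA (Or.inr (Or.inr ⟨c, rfl⟩))
    have hnu : (⋃ l, u (c l).1 (c l).2) ≠ Set.univ := by
      intro h
      have : y ∈ ⋃ l, u (c l).1 (c l).2 := h ▸ mem_univ y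
      obtain ⟨l, hl⟩ := mem_iUnion.1 this
      exact hk (g l) hl
    refine hf _ hnu ?_
    obtain ⟨x, hx, hx'⟩ := mem_iUnion₂.1 (hcov hp)
    rw [← hg] at hx
    obtain ⟨l, rfl⟩ := hx
    exact mem_iUnion.2 ⟨l, hx'⟩
  rw [huniv, mk_univ] at hH
  exact hH

theorem spread_le_of_almostDiscretelyLindelof
    {X : Type u} [TopologicalSpace X] [T2Space X] (κ : Cardinal.{u})
    (hκ : ℵ₀ ≤ κ)
    (hADL : AlmostDiscretelyLindelof X)
    (htight : ∀ A : Set X, ∀ x ∈ closure A, ∃ B ⊆ A, #B ≤ κ ∧ x ∈ closure B)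
    (hψ : ∀ x : X, ∃ 𝒰 : Set (Set X), #𝒰 ≤ κ ∧ (∀ U ∈ 𝒰, IsOpen U) ∧
      ⋂₀ 𝒰 = {x}) :
    ∀ D : Set X, DiscreteTopology D → #D ≤ 2 ^ κ := by
  intro D hD
  obtain ⟨Y, hDY, hY⟩ := hADL D hD
  refine (mk_le_mk_of_subset hDY).trans ?_
  have : LindelofSpace Y := isLindelof_iff_lindelofSpace.1 hY
  induction κ using Cardinal.inductionOn with
  | _ K =>
  have hu : ∀ x : X, ∃ u : K → Set X, (∀ k, IsOpen (u k)) ∧ ⋂ k, u k = {x} := by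
    intro x
    obtain ⟨U, hU, hUo, hUx⟩ := hψ x
    rcases U.eq_empty_or_nonempty with rfl | hne
    · refine ⟨fun _ => Set.univ, fun _ => isOpen_univ, ?_⟩
      rw [← hUx]; simp
    · obtain ⟨g, hg⟩ := aux_range hne hU
      refine ⟨g, fun k => hUo _ (hg ▸ mem_range_self k), ?_⟩
      rw [← hUx, ← hg, sInter_range]
  choose u huo hu using hu
  refine aux_shap hκ ?_ (fun (x : Y) k => Subtype.val ⁻¹' (u x k))
    (fun x k => (huo x k).preimage continuous_subtype_val) ?_
  · intro A x hx
    obtain ⟨B, hBA, hB, hxB⟩ := htight _ _ (closure_subtype.1 hx)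
    refine ⟨Subtype.val ⁻¹' B, ?_, (mk_preimage_of_injective _ _ Subtype.val_injective).trans hB, ?_⟩
    · intro z hz
      obtain ⟨w, hw, hwz⟩ := hBA hz
      exact Subtype.val_injective hwz ▸ hw
    · refine closure_subtype.2 (closure_mono ?_ hxB)
      intro z hz
      obtain ⟨w, hw, rfl⟩ := hBA hz
      exact ⟨w, hz, rfl⟩
  · intro x
    rw [← preimage_iInter, hu]
    ext z
    simp [Subtype.ext_iff]
end
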